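/- Let (Q, m, k) be a commutative Noetherian local ring and let f, g be an exact pair of zerodivisors in m, i.e. f and g are nonzero elements of m with ann_Q(f) = (g) and ann_Q(g) = (f). Set R = Q/(f). Then depth Q = depth R, where the depth of a Noetherian local ring (A, n, k) is the least integer i such that Ext_A^i(k, A) ≠ 0. (This is the equality depth Q − depth R = grade_Q R for a quasi-complete intersection homomorphism, in the case where the kernel is generated by a single exact zerodivisor, so that grade_Q R = 0.) -/

import Mathlib

/-!
Write `k` for the residue field of `Q` and `R = Q/(f)`. The annihilator conditions give two short
exact sequences `0 → Q/(g) → Q → R → 0` and `0 → R → Q → Q/(g) → 0`. If `Ext_Q^i(k, Q)` vanishes for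
`i < n`, then the two long exact sequences alternate to kill `Ext_Q^i(k, R)` and
`Ext_Q^i(k, Q/(g))` in the same range. Conversely the composite `Q → Q/(g) → Q` is multiplication by
`f`, which kills `Ext_Q^i(k, Q)`; so the vanishing of `Ext_Q^i(k, R)` for `i < n` forces that of
`Ext_Q^i(k, Q)`. Finally, by Rees' theorem, the vanishing of `Ext(k, R)` below degree `n` means the
same over `Q` as over `R`: both say that the maximal ideal contains an `R`-regular sequence of
length `n`.
-/

open CategoryTheory

/-- The depth of a Noetherian local ring `A`: the least `i` such that
`Ext_A^i(k, A) ≠ 0`, where `k` is the residue field. -/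
noncomputable def ringDepth (A : Type) [CommRing A] [IsLocalRing A] : ℕ :=
  sInf {i : ℕ |
    Nontrivial (((Ext A (ModuleCat A) i).obj
      (Opposite.op (ModuleCat.of A (IsLocalRing.ResidueField A)))).obj
      (ModuleCat.of A A))}

section DerivedExt

variable {R C : Type*} [Ring R] [Category* C] [Abelian C] [Linear R C]

lemma linearYonedaObj_exactAt_zero_iff (K : ChainComplex C ℕ) (Y : C) :
    (K.linearYonedaObj R Y).ExactAt 0 ↔ ∀ φ : K.X 0 ⟶ Y, K.d 1 0 ≫ φ = 0 → φ = 0 := by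
  rw [HomologicalComplex.exactAt_iff' _ 0 0 1 (by simp) (by simp),
    ShortComplex.moduleCat_exact_iff]
  refine forall₂_congr fun φ _ ↦ ⟨?_, fun hφ ↦ ⟨0, (map_zero _).trans hφ.symm⟩⟩
  rintro ⟨(ψ : K.X 0 ⟶ Y), (hψ : K.d 0 0 ≫ ψ = φ)⟩
  rw [← hψ, K.shape 0 0 (by simp), Limits.zero_comp]

lemma linearYonedaObj_exactAt_succ_iff (K : ChainComplex C ℕ) (Y : C) (n : ℕ) :
    (K.linearYonedaObj R Y).ExactAt (n + 1) ↔
      ∀ φ : K.X (n + 1) ⟶ Y, K.d (n + 2) (n + 1) ≫ φ = 0 →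
        ∃ ψ : K.X n ⟶ Y, K.d (n + 1) n ≫ ψ = φ := by
  rw [HomologicalComplex.exactAt_iff' _ n (n + 1) (n + 2) (by simp) (by simp),
    ShortComplex.moduleCat_exact_iff]
  rfl

lemma subsingleton_ext_zero_iff [HasExt C] {X : C} (P : ProjectiveResolution X) (Y : C) :
    Subsingleton (Abelian.Ext X Y 0) ↔
      ∀ φ : P.complex.X 0 ⟶ Y, P.complex.d 1 0 ≫ φ = 0 → φ = 0 := by
  let π : P.complex.X 0 ⟶ X := P.π.f 0
  have hdπ : P.complex.d 1 0 ≫ π = 0 := P.complex_d_comp_π_f_zero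
  have hexact : (ShortComplex.mk _ π hdπ).Exact := P.exact₀
  have : Epi π := inferInstanceAs (Epi (P.π.f 0))
  rw [Abelian.Ext.addEquiv₀.toEquiv.subsingleton_congr]
  constructor
  · intro _ φ hφ
    obtain ⟨u, rfl⟩ : ∃ u : X ⟶ Y, π ≫ u = φ := hexact.desc' φ hφ
    rw [Subsingleton.elim u 0, Limits.comp_zero]
  · intro h
    refine subsingleton_of_forall_eq 0 fun u ↦ ?_
    rw [← cancel_epi π, h (π ≫ u) (by rw [reassoc_of% hdπ, Limits.zero_comp]), Limits.comp_zero]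

lemma subsingleton_ext_succ_iff [HasExt C] {X : C} (P : ProjectiveResolution X) (Y : C) (n : ℕ) :
    Subsingleton (Abelian.Ext X Y (n + 1)) ↔
      ∀ φ : P.complex.X (n + 1) ⟶ Y, P.complex.d (n + 2) (n + 1) ≫ φ = 0 →
        ∃ ψ : P.complex.X n ⟶ Y, P.complex.d (n + 1) n ≫ ψ = φ := by
  constructor
  · intro _ φ hφ
    exact (P.extMk_eq_zero_iff φ (n + 2) rfl hφ n rfl).1 (Subsingleton.elim _ _)
  · intro h
    refine subsingleton_of_forall_eq 0 fun x ↦ ?_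
    obtain ⟨φ, hφ, rfl⟩ := P.extMk_surjective x (n + 2) rfl
    exact (P.extMk_eq_zero_iff φ (n + 2) rfl hφ n rfl).2 (h φ hφ)

lemma subsingleton_derivedExt_iff_subsingleton_ext [EnoughProjectives C] [HasExt C]
    (X Y : C) (n : ℕ) :
    Subsingleton (((Ext R C n).obj (Opposite.op X)).obj Y) ↔
      Subsingleton (Abelian.Ext X Y n) := by
  let P := projectiveResolution X
  rw [← ModuleCat.isZero_iff_subsingleton, (P.isoExt (R := R) n Y).isZero_iff,
    ← HomologicalComplex.exactAt_iff_isZero_homology]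
  cases n with
  | zero => rw [linearYonedaObj_exactAt_zero_iff, subsingleton_ext_zero_iff P]
  | succ n => rw [linearYonedaObj_exactAt_succ_iff, subsingleton_ext_succ_iff P]

end DerivedExt

/-- For `s = ∅` both sides take the junk value `0`. -/
lemma sSup_lowerBounds_eq_sInf_nat (s : Set ℕ) : sSup (lowerBounds s) = sInf s := by
  rcases s.eq_empty_or_nonempty with rfl | hs
  · rw [lowerBounds_empty, Nat.sInf_empty, Nat.sSup_of_not_bddAbove not_bddAbove_univ]
  · exact csSup_lowerBounds_eq_csInf (OrderBot.bddBelow s) hs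

lemma ringDepth_eq_sSup (A : Type) [CommRing A] [IsLocalRing A] :
    ringDepth A = sSup {n | ∀ i < n, Subsingleton
      (Abelian.Ext (ModuleCat.of A (IsLocalRing.ResidueField A)) (ModuleCat.of A A) i)} := by
  rw [ringDepth, ← sSup_lowerBounds_eq_sInf_nat]
  congr 1 with n
  simp only [mem_lowerBounds, Set.mem_ofPred_eq,
    ← subsingleton_derivedExt_iff_subsingleton_ext (R := A), ← not_nontrivial_iff_subsingleton]
  exact forall_congr' fun i ↦ by rw [imp_not_comm, not_lt]

section CrossedShortExact

variable {C : Type*} [Category* C] [Abelian C] [HasExt C] (X : C)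

lemma eq_zero_of_comp_mk₀_f_eq_zero {S : ShortComplex C} (hS : S.ShortExact) {i : ℕ}
    (h₃ : ∀ j, j + 1 = i → Subsingleton (Abelian.Ext X S.X₃ j)) {x : Abelian.Ext X S.X₁ i}
    (hx : x.comp (Abelian.Ext.mk₀ S.f) (add_zero i) = 0) : x = 0 := by
  cases i with
  | zero =>
    have := hS.mono_f
    exact Abelian.Ext.postcomp_mk₀_injective_of_mono X S.f (by simpa using hx)
  | succ j =>
    obtain ⟨y, rfl⟩ := Abelian.Ext.covariant_sequence_exact₁ X hS x hx rfl
    rw [(h₃ j rfl).elim y 0, Abelian.Ext.zero_comp]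

variable {X} {A B M : C} {a : A ⟶ M} {b : M ⟶ B} {c : B ⟶ M} {d : M ⟶ A}
  {hab : a ≫ b = 0} {hcd : c ≫ d = 0}

lemma subsingleton_ext_ends_of_crossed_shortExact (hS : (ShortComplex.mk a b hab).ShortExact)
    (hT : (ShortComplex.mk c d hcd).ShortExact) {n : ℕ}
    (hM : ∀ i < n, Subsingleton (Abelian.Ext X M i)) (i : ℕ) (hi : i < n) :
    Subsingleton (Abelian.Ext X A i) ∧ Subsingleton (Abelian.Ext X B i) := by
  induction i using Nat.strong_induction_on with
  | h i ih =>
    have := hM i hi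
    exact ⟨subsingleton_of_forall_eq 0 fun _ ↦ eq_zero_of_comp_mk₀_f_eq_zero X hS
        (fun j hj ↦ (ih j (by lia) (by lia)).2) (Subsingleton.elim _ _),
      subsingleton_of_forall_eq 0 fun _ ↦ eq_zero_of_comp_mk₀_f_eq_zero X hT
        (fun j hj ↦ (ih j (by lia) (by lia)).1) (Subsingleton.elim _ _)⟩

lemma subsingleton_ext_middle_of_crossed_shortExact (hS : (ShortComplex.mk a b hab).ShortExact)
    (hT : (ShortComplex.mk c d hcd).ShortExact) {i : ℕ}
    (hB : ∀ j ≤ i, Subsingleton (Abelian.Ext X B j))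
    (hda : ∀ x : Abelian.Ext X M i, x.comp (Abelian.Ext.mk₀ (d ≫ a)) (add_zero i) = 0) :
    Subsingleton (Abelian.Ext X M i) := by
  refine subsingleton_of_forall_eq 0 fun x ↦ ?_
  have hxd : x.comp (Abelian.Ext.mk₀ d) (add_zero i) = 0 :=
    eq_zero_of_comp_mk₀_f_eq_zero X hS (fun j hj ↦ hB j (by lia)) <| by
      rw [Abelian.Ext.comp_assoc_of_third_deg_zero, Abelian.Ext.mk₀_comp_mk₀, hda]
  obtain ⟨y, rfl⟩ := Abelian.Ext.covariant_sequence_exact₂ X hT x hxd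
  rw [(hB i le_rfl).elim y 0, Abelian.Ext.zero_comp]

end CrossedShortExact

section ExactPair

open scoped Pointwise

universe u v

variable {R : Type u} [CommRing R] {M : Type v} [AddCommGroup M] [Module R M] {f g : R}

variable (M f g) in
/-- Scalars `f` and `g` form an exact pair on `M` if the kernel of either one acting on `M` is the
image of the other. For nonzero `f` and `g` and `M = R` this is the notion of an exact pair of
zerodivisors; the module version allows degenerate pairs such as `(0, 1)`. -/
structure IsExactPair : Prop where
  ker_lsmul_left : (LinearMap.lsmul R M f).ker = g • (⊤ : Submodule R M)
  ker_lsmul_right : (LinearMap.lsmul R M g).ker = f • (⊤ : Submodule R M)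

namespace IsExactPair

lemma symm (h : IsExactPair M f g) : IsExactPair M g f :=
  ⟨h.ker_lsmul_right, h.ker_lsmul_left⟩

/-- Multiplication by `f`, as a map out of `M ⧸ g M`. -/
def liftSMul (h : IsExactPair M f g) : M ⧸ (g • ⊤ : Submodule R M) →ₗ[R] M :=
  (g • ⊤ : Submodule R M).liftQ (LinearMap.lsmul R M f) h.ker_lsmul_left.ge

lemma liftSMul_injective (h : IsExactPair M f g) : Function.Injective h.liftSMul :=
  LinearMap.ker_eq_bot.1 (Submodule.ker_liftQ_eq_bot _ _ _ h.ker_lsmul_left.le)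

lemma exact_liftSMul_mkQ (h : IsExactPair M f g) :
    Function.Exact h.liftSMul (f • ⊤ : Submodule R M).mkQ := by
  rw [LinearMap.exact_iff, liftSMul, Submodule.range_liftQ]
  exact LinearMap.exact_iff.1 (LinearMap.exact_lsmul_mkQ_smul_top M f)

/-- The complex `M ⧸ g M → M → M ⧸ f M`, whose first map is multiplication by `f`. -/
abbrev shortComplex (h : IsExactPair M f g) : ShortComplex (ModuleCat.{v} R) :=
  ModuleCat.shortComplexOfCompEqZero h.liftSMul (f • ⊤ : Submodule R M).mkQ
    h.exact_liftSMul_mkQ.linearMap_comp_eq_zero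

lemma shortComplex_shortExact (h : IsExactPair M f g) : h.shortComplex.ShortExact :=
  ModuleCat.shortComplex_shortExact _ h.exact_liftSMul_mkQ h.liftSMul_injective
    (Submodule.mkQ_surjective _)

lemma mkQ_comp_liftSMul (h : IsExactPair M f g) :
    ModuleCat.ofHom (g • ⊤ : Submodule R M).mkQ ≫ ModuleCat.ofHom h.liftSMul =
      f • 𝟙 (ModuleCat.of R M) :=
  rfl

lemma forall_subsingleton_ext_quotient_iff [Small.{v} R] (h : IsExactPair M f g)
    {N : ModuleCat.{v} R} (hf : f ∈ Module.annihilator R N) (n : ℕ) :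
    (∀ i < n, Subsingleton (Abelian.Ext N (ModuleCat.of R (M ⧸ (f • ⊤ : Submodule R M))) i)) ↔
      ∀ i < n, Subsingleton (Abelian.Ext N (ModuleCat.of R M) i) := by
  refine ⟨fun hB i hi ↦ ?_, fun hM i hi ↦ (subsingleton_ext_ends_of_crossed_shortExact
    h.shortComplex_shortExact h.symm.shortComplex_shortExact hM i hi).2⟩
  refine subsingleton_ext_middle_of_crossed_shortExact h.shortComplex_shortExact
    h.symm.shortComplex_shortExact (fun j hj ↦ hB j (hj.trans_lt hi)) fun x ↦ ?_
  rw [h.mkQ_comp_liftSMul]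
  exact DFunLike.congr_fun (congrArg AddCommGrpCat.Hom.hom
    (Abelian.Ext.postcomp_smul_id_eq_zero_of_mem_annihilator (M := ModuleCat.of R M) hf i)) x

end IsExactPair

end ExactPair

section ChangeOfRings

open IsLocalRing RingTheory.Sequence

universe u

lemma support_residueField (A : Type*) [CommRing A] [IsLocalRing A] :
    Module.support A (ResidueField A) = PrimeSpectrum.zeroLocus (maximalIdeal A) := by
  rw [Module.support_of_algebra, ResidueField.algebraMap_eq, ker_residue]

lemma mem_annihilator_residueField {A : Type*} [CommRing A] [IsLocalRing A] {r : A}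
    (hr : r ∈ maximalIdeal A) : r ∈ Module.annihilator A (ResidueField A) :=
  Module.mem_annihilator.2 fun x ↦ by
    rw [Algebra.smul_def, ResidueField.algebraMap_eq, (residue_eq_zero_iff r).2 hr, zero_mul]

lemma forall_subsingleton_ext_residueField_iff_exists_isWeaklyRegular
    (A M : Type u) [CommRing A] [IsLocalRing A] [IsNoetherianRing A]
    [AddCommGroup M] [Module A M] [Module.Finite A M] [Nontrivial M] (n : ℕ) :
    (∀ i < n, Subsingleton (Abelian.Ext (ModuleCat.of A (ResidueField A)) (ModuleCat.of A M) i)) ↔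
      ∃ rs : List A, rs.length = n ∧ (∀ r ∈ rs, r ∈ maximalIdeal A) ∧ IsWeaklyRegular M rs := by
  have hlt : maximalIdeal A • (⊤ : Submodule A M) < ⊤ :=
    (Submodule.top_ne_ideal_smul_of_le_jacobson_annihilator
      (maximalIdeal_le_jacobson _)).symm.lt_top
  have hsupp := support_residueField A
  constructor
  · intro h
    obtain ⟨rs, hlen, hmem, hreg⟩ := ModuleCat.exists_isRegular_of_exists_subsingleton_ext
      (maximalIdeal A) n (ModuleCat.of A M) hlt (ModuleCat.of A (ResidueField A)) hsupp h
    exact ⟨rs, hlen, hmem, hreg.toIsWeaklyRegular⟩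
  · rintro ⟨rs, rfl, hmem, hreg⟩
    exact ModuleCat.subsingleton_ext_of_exists_isRegular (maximalIdeal A)
      (ModuleCat.of A (ResidueField A)) hsupp.subset (ModuleCat.of A M) hlt rs hmem
      ((isRegular_iff_isWeaklyRegular_of_subset_maximalIdeal hmem).2 hreg)

section

variable {A B : Type*} [CommRing A] [IsLocalRing A] [CommRing B] [IsLocalRing B] [Algebra A B]

lemma algebraMap_mem_maximalIdeal_iff_of_surjective
    (hAB : Function.Surjective (algebraMap A B)) (r : A) :
    algebraMap A B r ∈ maximalIdeal B ↔ r ∈ maximalIdeal A := by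
  have : IsLocalHom (algebraMap A B) := .of_surjective _ hAB
  simp only [mem_maximalIdeal, map_mem_nonunits_iff]

lemma exists_isWeaklyRegular_iff_of_surjective (hAB : Function.Surjective (algebraMap A B))
    (M : Type*) [AddCommGroup M] [Module A M] [Module B M] [IsScalarTower A B M] (n : ℕ) :
    (∃ rs : List B, rs.length = n ∧ (∀ r ∈ rs, r ∈ maximalIdeal B) ∧ IsWeaklyRegular M rs) ↔
      ∃ rs : List A, rs.length = n ∧ (∀ r ∈ rs, r ∈ maximalIdeal A) ∧ IsWeaklyRegular M rs := by
  rw [(List.map_surjective_iff.2 hAB).exists]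
  simp only [List.length_map, List.forall_mem_map, isWeaklyRegular_map_algebraMap_iff,
    algebraMap_mem_maximalIdeal_iff_of_surjective hAB]

end

lemma forall_subsingleton_ext_residueField_iff_of_surjective {A B : Type u}
    [CommRing A] [IsLocalRing A] [IsNoetherianRing A]
    [CommRing B] [IsLocalRing B] [Algebra A B]
    (hAB : Function.Surjective (algebraMap A B)) (M : Type u) [AddCommGroup M] [Module A M]
    [Module B M] [IsScalarTower A B M] [Module.Finite A M] [Nontrivial M] (n : ℕ) :
    (∀ i < n, Subsingleton (Abelian.Ext (ModuleCat.of B (ResidueField B)) (ModuleCat.of B M) i)) ↔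
      ∀ i < n, Subsingleton
        (Abelian.Ext (ModuleCat.of A (ResidueField A)) (ModuleCat.of A M) i) := by
  have : IsNoetherianRing B := isNoetherianRing_of_surjective A B _ hAB
  have : Module.Finite B M := .of_restrictScalars_finite A B M
  rw [forall_subsingleton_ext_residueField_iff_exists_isWeaklyRegular B,
    forall_subsingleton_ext_residueField_iff_exists_isWeaklyRegular A,
    exists_isWeaklyRegular_iff_of_surjective hAB]

end ChangeOfRings

section Principal

open scoped Pointwise

variable {Q : Type*} [CommRing Q]

lemma smul_top_eq_span_singleton (f : Q) : f • (⊤ : Submodule Q Q) = Ideal.span {f} := by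
  rw [← Submodule.ideal_span_singleton_smul, smul_eq_mul, Ideal.mul_top]

lemma isExactPair_self_of_mul_eq_zero_iff {f g : Q} (hf : ∀ x, x * f = 0 ↔ x ∈ Ideal.span {g})
    (hg : ∀ x, x * g = 0 ↔ x ∈ Ideal.span {f}) : IsExactPair Q f g where
  ker_lsmul_left := by ext x; simp [smul_top_eq_span_singleton, ← hf, mul_comm]
  ker_lsmul_right := by ext x; simp [smul_top_eq_span_singleton, ← hg, mul_comm]

end Principal

/-- **Depth equality.** Let `f, g` be an exact pair of zerodivisors in the
maximal ideal of a Noetherian local ring `Q` and set `R = Q/(f)`. Then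
`depth Q = depth R` (the case `grade_Q R = 0` of the equality
`depth Q − depth R = grade_Q R` for q.c.i. homomorphisms). -/
theorem depth_eq_of_exact_zerodivisor
    (Q : Type) [CommRing Q] [IsNoetherianRing Q] [IsLocalRing Q]
    (f g : Q) (hf0 : f ≠ 0) (hg0 : g ≠ 0)
    (hfm : f ∈ IsLocalRing.maximalIdeal Q) (hgm : g ∈ IsLocalRing.maximalIdeal Q)
    (hannf : ∀ x : Q, x * f = 0 ↔ x ∈ Ideal.span {g})
    (hanng : ∀ x : Q, x * g = 0 ↔ x ∈ Ideal.span {f})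
    [IsLocalRing (Q ⧸ Ideal.span {f})] :
    ringDepth Q = ringDepth (Q ⧸ Ideal.span {f}) := by
  rw [ringDepth_eq_sSup, ringDepth_eq_sSup]
  congr 1 with n
  have hpair : IsExactPair Q f g := isExactPair_self_of_mul_eq_zero_iff hannf hanng
  have hExt := hpair.forall_subsingleton_ext_quotient_iff
    (N := .of Q (IsLocalRing.ResidueField Q)) (mem_annihilator_residueField hfm) n
  rw [smul_top_eq_span_singleton] at hExt
  exact hExt.symm.trans (forall_subsingleton_ext_residueField_iff_of_surjective
    Ideal.Quotient.mk_surjective (Q ⧸ Ideal.span {f}) n).symm
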